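/- Let 1 ≤ k ≤ n−1. Then for all α ∈ B_k and β ∈ B_{n−k}, in the braid group B_n one has δ^k · ι_low^{(k)}(α) · ι_high^{(k)}(β) = ι_low^{(n−k)}(β) · ι_high^{(n−k)}(α) · δ^k, where for 1 ≤ m ≤ n−1, ι_low^{(m)} : B_m → B_n denotes the group homomorphism determined on generators by σ_i ↦ σ_i (1 ≤ i ≤ m−1), and ι_high^{(m)} : B_{n−m} → B_n denotes the group homomorphism determined on generators by σ_j ↦ σ_{m+j} (1 ≤ j ≤ n−m−1). -/

import Mathlib

/-- The braid relations on `m` generators (so that `σ_1, …, σ_m` present the braid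
group `B_{m+1}`); generator `i : Fin m` corresponds to `σ_{i+1}`. -/
def braidRels (m : ℕ) : Set (FreeGroup (Fin m)) :=
  {r | ∃ i j : Fin m, (i.val + 2 ≤ j.val ∨ j.val + 2 ≤ i.val) ∧
        r = FreeGroup.of i * FreeGroup.of j * (FreeGroup.of i)⁻¹ * (FreeGroup.of j)⁻¹}
  ∪ {r | ∃ i j : Fin m, (i.val + 1 = j.val ∨ j.val + 1 = i.val) ∧
        r = FreeGroup.of i * FreeGroup.of j * FreeGroup.of i *
            (FreeGroup.of j * FreeGroup.of i * FreeGroup.of j)⁻¹}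

/-- The braid group `B n` on `n` strands, presented with generators `σ_1, …, σ_{n-1}`. -/
abbrev BraidGroup (n : ℕ) : Type := PresentedGroup (braidRels (n - 1))

namespace BraidGroup

/-- The Artin generator `σ_i` of `B n` for `1 ≤ i ≤ n - 1` (junk value `1` otherwise). -/
def σ (n i : ℕ) : BraidGroup n :=
  if h : 1 ≤ i ∧ i ≤ n - 1 then PresentedGroup.of (⟨i - 1, by omega⟩ : Fin (n - 1)) else 1

/-- `D n k = σ_{k-1} ⋯ σ_2 σ_1` in `B n`; `D n 1 = 1`. -/
def D (n k : ℕ) : BraidGroup n :=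
  (((List.range (k - 1)).reverse).map (fun j => σ n (j + 1))).prod

/-- `E n k = σ_1 σ_2 ⋯ σ_{k-1}` in `B n`; `E n 1 = 1`. -/
def E (n k : ℕ) : BraidGroup n :=
  ((List.range (k - 1)).map (fun j => σ n (j + 1))).prod

/-- `U n k = D n k * E n k` in `B n`; `U n 1 = 1`. -/
def U (n k : ℕ) : BraidGroup n := D n k * E n k

/-- `δ = σ_{n-1} σ_{n-2} ⋯ σ_1` in `B n`. -/
def delta (n : ℕ) : BraidGroup n := D n n

/-- `Δ = σ_1 (σ_2 σ_1) ⋯ (σ_{n-1} ⋯ σ_1) = D_2 D_3 ⋯ D_n` in `B n`. -/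
def Delta (n : ℕ) : BraidGroup n :=
  ((List.range (n - 1)).map (fun j => D n (j + 2))).prod

end BraidGroup

/-!
Conjugation by `δ` sends `σ_{i+1}` to `σ_i`, so conjugation by `δ^k` slides any block of strands
above the first `k` down by `k`. The generators `σ_i` with `i < k` wrap around: `δ^{i-1}` brings
`σ_i` to `σ_1`, then `δ^2` carries `σ_1` to `σ_{n-1}`, and the remaining `k - i - 1` factors bring
that down to `σ_{n-k+i}`. The wrap-around step comes from `δ · D_{j+1} = D_j · δ · σ_1`, which at
`j = n - 1` reads `δ^2 = D_{n-1} · δ · σ_1`.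
-/

namespace BraidGroup

theorem σ_eq_of {n i : ℕ} (h : 1 ≤ i ∧ i ≤ n - 1) :
    σ n i = PresentedGroup.of (⟨i - 1, by omega⟩ : Fin (n - 1)) :=
  dif_pos h

theorem σ_eq_one {n i : ℕ} (h : ¬(1 ≤ i ∧ i ≤ n - 1)) : σ n i = 1 :=
  dif_neg h

theorem commute_σ (n : ℕ) {i j : ℕ} (hij : i + 2 ≤ j) : Commute (σ n i) (σ n j) := by
  by_cases hi : 1 ≤ i ∧ i ≤ n - 1
  · by_cases hj : 1 ≤ j ∧ j ≤ n - 1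
    · have hrel := PresentedGroup.one_of_mem (rels := braidRels (n - 1))
        (Or.inl ⟨⟨i - 1, by omega⟩, ⟨j - 1, by omega⟩, Or.inl (by grind), rfl⟩)
      simp only [map_mul, map_inv, mul_inv_eq_iff_eq_mul, one_mul] at hrel
      rw [σ_eq_of hi, σ_eq_of hj]
      exact hrel
    · rw [σ_eq_one hj]
      exact Commute.one_right _
  · rw [σ_eq_one hi]
    exact Commute.one_left _

theorem σ_braid {n i : ℕ} (hi : 1 ≤ i) (hin : i + 1 < n) :
    σ n i * σ n (i + 1) * σ n i = σ n (i + 1) * σ n i * σ n (i + 1) := by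
  have hrel := PresentedGroup.one_of_mem (rels := braidRels (n - 1))
    (Or.inr ⟨⟨i - 1, by omega⟩, ⟨i, by omega⟩, Or.inl (Nat.sub_add_cancel hi), rfl⟩)
  simp only [map_mul, map_inv, mul_inv_eq_one] at hrel
  rw [σ_eq_of (by omega : 1 ≤ i ∧ i ≤ n - 1), σ_eq_of (by omega : 1 ≤ i + 1 ∧ i + 1 ≤ n - 1)]
  exact hrel

section Homs

variable {G : Type*} [Group G] {m l : ℕ}

theorem hom_ext {f g : BraidGroup m →* G}
    (h : ∀ i, 1 ≤ i → i ≤ m - 1 → f (σ m i) = g (σ m i)) : f = g :=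
  PresentedGroup.ext fun i ↦ by
    have hσ := h (i + 1) (by omega) (by omega)
    rw [σ_eq_of (by omega : 1 ≤ i.val + 1 ∧ i.val + 1 ≤ m - 1)] at hσ
    exact hσ

theorem semiconjBy_map {d : G} {f g : BraidGroup m →* G}
    (h : ∀ i, 1 ≤ i → i ≤ m - 1 → SemiconjBy d (f (σ m i)) (g (σ m i))) (α : BraidGroup m) :
    SemiconjBy d (f α) (g α) := by
  have hconj : (MulAut.conj d).toMonoidHom.comp f = g :=
    hom_ext fun i hi him ↦ mul_inv_eq_iff_eq_mul.2 (h i hi him).eq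
  exact mul_inv_eq_iff_eq_mul.1 (DFunLike.congr_fun hconj α)

theorem commute_map_map {f : BraidGroup m →* G} {g : BraidGroup l →* G}
    (h : ∀ i j, 1 ≤ i → i ≤ m - 1 → 1 ≤ j → j ≤ l - 1 → Commute (f (σ m i)) (g (σ l j)))
    (α : BraidGroup m) (β : BraidGroup l) : Commute (f α) (g β) :=
  have hσ (i : ℕ) (hi : 1 ≤ i) (him : i ≤ m - 1) : Commute (f (σ m i)) (g β) :=
    semiconjBy_map (fun j hj hjl ↦ h i j hi him hj hjl) β
  Commute.symm (semiconjBy_map (fun i hi him ↦ (hσ i hi him).symm) α)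

end Homs

theorem D_one (n : ℕ) : D n 1 = 1 := rfl

-- At `m = 0` this is `1 = 1`, because `σ n 0 = 1` and `D n 0 = D n 1`.
theorem D_succ (n m : ℕ) : D n (m + 1) = σ n m * D n m := by
  cases m with
  | zero => simp [D, σ]
  | succ m => simp [D, List.range_succ]

theorem commute_D_σ (n : ℕ) {m i : ℕ} (hmi : m < i) : Commute (D n m) (σ n i) := by
  induction m with
  | zero => exact Commute.one_left _
  | succ m ih =>
    rw [D_succ]
    exact (commute_σ n hmi).mul_left (ih (by omega))

theorem semiconjBy_D_σ {n m i : ℕ} (hi : 1 ≤ i) (him : i + 2 ≤ m) (hmn : m ≤ n) :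
    SemiconjBy (D n m) (σ n (i + 1)) (σ n i) := by
  induction m, him using Nat.le_induction with
  | base =>
    have hcomm : D n i * σ n (i + 1) = σ n (i + 1) * D n i := commute_D_σ n i.lt_succ_self
    calc D n (i + 2) * σ n (i + 1)
        = σ n (i + 1) * σ n i * (D n i * σ n (i + 1)) := by simp only [D_succ, mul_assoc]
      _ = σ n (i + 1) * σ n i * σ n (i + 1) * D n i := by rw [hcomm, mul_assoc _ _ (D n i)]
      _ = σ n i * σ n (i + 1) * σ n i * D n i := by rw [σ_braid hi hmn]
      _ = σ n i * D n (i + 2) := by simp only [D_succ, mul_assoc]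
  | succ m him ih =>
    rw [D_succ]
    exact SemiconjBy.mul_left (commute_σ n him).symm (ih (by omega))

theorem semiconjBy_delta_σ {n i : ℕ} (hi : 1 ≤ i) (hin : i + 1 < n) :
    SemiconjBy (delta n) (σ n (i + 1)) (σ n i) :=
  semiconjBy_D_σ hi hin le_rfl

theorem delta_mul_D_succ {n j : ℕ} (hj : 1 ≤ j) (hjn : j < n) :
    delta n * D n (j + 1) = D n j * delta n * σ n 1 := by
  induction j, hj using Nat.le_induction with
  | base => simp only [D_succ n 1, D_one, mul_one, one_mul]
  | succ j hj ih =>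
    calc delta n * D n (j + 2)
        = delta n * σ n (j + 1) * D n (j + 1) := by rw [D_succ, mul_assoc]
      _ = σ n j * (delta n * D n (j + 1)) := by rw [(semiconjBy_delta_σ hj hjn).eq, mul_assoc]
      _ = σ n j * (D n j * delta n * σ n 1) := by rw [ih (by omega)]
      _ = D n (j + 1) * delta n * σ n 1 := by simp only [D_succ, mul_assoc]

theorem semiconjBy_delta_sq_σ_one {n : ℕ} (hn : 2 ≤ n) :
    SemiconjBy (delta n ^ 2) (σ n 1) (σ n (n - 1)) := by
  obtain ⟨m, rfl⟩ : ∃ m, n = m + 1 := ⟨n - 1, by omega⟩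
  have hdelta : delta (m + 1) = σ (m + 1) m * D (m + 1) m := D_succ (m + 1) m
  have hsq : delta (m + 1) * delta (m + 1) = D (m + 1) m * delta (m + 1) * σ (m + 1) 1 :=
    delta_mul_D_succ (by omega) m.lt_succ_self
  calc delta (m + 1) ^ 2 * σ (m + 1) 1
      = σ (m + 1) m * D (m + 1) m * delta (m + 1) * σ (m + 1) 1 := by rw [sq, ← hdelta]
    _ = σ (m + 1) m * delta (m + 1) ^ 2 := by rw [sq, hsq]; simp only [mul_assoc]

theorem semiconjBy_delta_pow_σ_add {n k i : ℕ} (hi : 1 ≤ i) (hin : k + i < n) :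
    SemiconjBy (delta n ^ k) (σ n (k + i)) (σ n i) := by
  induction k with
  | zero => simp only [pow_zero, zero_add, SemiconjBy.one_left]
  | succ k ih =>
    rw [pow_succ, Nat.add_right_comm]
    exact (ih (by omega)).mul_left (semiconjBy_delta_σ (by omega) (by omega))

theorem semiconjBy_delta_pow_σ_of_lt {n k l i : ℕ} (hi : 1 ≤ i) (hik : i < k) (hn : l + k = n) :
    SemiconjBy (delta n ^ k) (σ n i) (σ n (l + i)) := by
  obtain ⟨a, rfl⟩ : ∃ a, i = a + 1 := ⟨i - 1, by omega⟩
  obtain ⟨b, rfl⟩ : ∃ b, k = b + 2 + a := ⟨k - (a + 2), by omega⟩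
  have down_to_one : SemiconjBy (delta n ^ a) (σ n (a + 1)) (σ n 1) :=
    semiconjBy_delta_pow_σ_add le_rfl (by omega)
  have wrap_around : SemiconjBy (delta n ^ 2) (σ n 1) (σ n (n - 1)) :=
    semiconjBy_delta_sq_σ_one (by omega)
  have down_from_top : SemiconjBy (delta n ^ b) (σ n (n - 1)) (σ n (l + (a + 1))) := by
    have σ_top : σ n (n - 1) = σ n (b + (l + (a + 1))) := congrArg (σ n) (by omega)
    rw [σ_top]
    exact semiconjBy_delta_pow_σ_add (by omega) (by omega)
  rw [pow_add, pow_add]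
  exact (down_from_top.mul_left wrap_around).mul_left down_to_one

/-- `f` is the standard map from `B m` to the braids on the strands `s + 1, …, s + m` in `B n`, that
is, `σ_i ↦ σ_{s+i}`. Thus `ι_low^{(m)}` is the case `s = 0`, and `ι_high^{(s)}` the case
`m = n - s`. It is a predicate on homomorphisms because these are determined by their values on
the generators. -/
def IsShift {m n : ℕ} (s : ℕ) (f : BraidGroup m →* BraidGroup n) : Prop :=
  ∀ i, 1 ≤ i → i ≤ m - 1 → f (σ m i) = σ n (s + i)

namespace IsShift

variable {m n k l s t : ℕ}

theorem commute {f : BraidGroup m →* BraidGroup n} {g : BraidGroup l →* BraidGroup n}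
    (hf : IsShift s f) (hg : IsShift t g) (hst : s + m ≤ t) (α : BraidGroup m)
    (β : BraidGroup l) : Commute (f α) (g β) := by
  refine commute_map_map (fun i j hi him hj hjl ↦ ?_) α β
  rw [hf i hi him, hg j hj hjl]
  exact commute_σ n (by omega)

variable {f g : BraidGroup m →* BraidGroup n}

theorem semiconjBy_delta_pow_down (hf : IsShift (k + s) f) (hg : IsShift s g)
    (hn : k + s + m ≤ n) (α : BraidGroup m) : SemiconjBy (delta n ^ k) (f α) (g α) := by
  refine semiconjBy_map (fun i hi him ↦ ?_) α
  rw [hf i hi him, hg i hi him, add_assoc]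
  exact semiconjBy_delta_pow_σ_add (by omega) (by omega)

theorem semiconjBy_delta_pow_wrap (hf : IsShift s f) (hg : IsShift (l + s) g)
    (hk : s + m ≤ k) (hn : l + k = n) (α : BraidGroup m) :
    SemiconjBy (delta n ^ k) (f α) (g α) := by
  refine semiconjBy_map (fun i hi him ↦ ?_) α
  rw [hf i hi him, hg i hi him, add_assoc]
  exact semiconjBy_delta_pow_σ_of_lt (by omega) (by omega) hn

end IsShift

end BraidGroup

/-- **Lemma (shift past δ^k).** Let `1 ≤ k ≤ n - 1`. If `f = ι_low^{(k)} : B_k → B_n`,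
`g = ι_high^{(k)} : B_{n-k} → B_n`, `f' = ι_low^{(n-k)} : B_{n-k} → B_n` and
`g' = ι_high^{(n-k)} : B_k → B_n` are the homomorphisms determined on generators by
`σ_i ↦ σ_i`, `σ_j ↦ σ_{k+j}`, `σ_i ↦ σ_i`, `σ_j ↦ σ_{(n-k)+j}` respectively, then for
all `α ∈ B_k`, `β ∈ B_{n-k}` one has `δ^k · f α · g β = f' β · g' α · δ^k` in `B n`. -/
theorem delta_pow_splice (n k : ℕ) (hk1 : 1 ≤ k) (hkn : k ≤ n - 1)
    (f : BraidGroup k →* BraidGroup n)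
    (g : BraidGroup (n - k) →* BraidGroup n)
    (f' : BraidGroup (n - k) →* BraidGroup n)
    (g' : BraidGroup k →* BraidGroup n)
    (hf : ∀ i, 1 ≤ i → i ≤ k - 1 → f (BraidGroup.σ k i) = BraidGroup.σ n i)
    (hg : ∀ j, 1 ≤ j → j ≤ n - k - 1 →
      g (BraidGroup.σ (n - k) j) = BraidGroup.σ n (k + j))
    (hf' : ∀ i, 1 ≤ i → i ≤ n - k - 1 →
      f' (BraidGroup.σ (n - k) i) = BraidGroup.σ n i)
    (hg' : ∀ j, 1 ≤ j → j ≤ k - 1 →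
      g' (BraidGroup.σ k j) = BraidGroup.σ n ((n - k) + j)) :
    ∀ (α : BraidGroup k) (β : BraidGroup (n - k)),
      BraidGroup.delta n ^ k * f α * g β = f' β * g' α * BraidGroup.delta n ^ k := by
  intro α β
  have f_shift : BraidGroup.IsShift 0 f := by simpa only [BraidGroup.IsShift, zero_add] using hf
  have f'_shift : BraidGroup.IsShift 0 f' := by
    simpa only [BraidGroup.IsShift, zero_add] using hf'
  have g_shift : BraidGroup.IsShift k g := hg
  have g'_shift : BraidGroup.IsShift (n - k) g' := hg'
  have hα : SemiconjBy (BraidGroup.delta n ^ k) (f α) (g' α) :=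
    f_shift.semiconjBy_delta_pow_wrap (l := n - k) g'_shift (by omega) (by omega) α
  have hβ : SemiconjBy (BraidGroup.delta n ^ k) (g β) (f' β) :=
    BraidGroup.IsShift.semiconjBy_delta_pow_down (s := 0) g_shift f'_shift (by omega) β
  have hαβ : Commute (f α) (g β) := f_shift.commute g_shift (by omega) α β
  rw [mul_assoc, hαβ.eq]
  exact (hβ.mul_right hα).eq
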